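/- Let G be a finite graph whose vertex set is partitioned into 'fake' vertices and 'genuine' vertices, with e_- genuine vertices in total and h_- edges in total. Suppose e_- − h_- > 0. Then some connected component Γ of G is a tree containing no fake vertices. -/

import Mathlib

open Finset

/-- Let `G` be a finite graph whose vertices are partitioned into `fake` and
genuine vertices.  If the number `e₋` of genuine vertices exceeds the number
`h₋` of edges, then some connected component of `G` is a tree containing no
fake vertices. -/
theorem exists_tree_component {V : Type*} [Fintype V] [DecidableEq V]
    (G : SimpleGraph V) [DecidableRel G.Adj]
    (fake : V → Prop) [DecidablePred fake]
    (h : (G.edgeFinset.card : ℤ) < (univ.filter fun v => ¬ fake v).card) :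
    ∃ Γ : G.ConnectedComponent,
      (G.induce Γ.supp).IsTree ∧ ∀ v ∈ Γ.supp, ¬ fake v := by
  classical
  by_contra hcon
  push Not at hcon
  let E : G.ConnectedComponent → Finset (Sym2 V) := fun Γ =>
    G.edgeFinset.filter fun e => ∀ v ∈ e, G.connectedComponentMk v = Γ
  have key : ∀ Γ : G.ConnectedComponent,
      ((univ.filter fun v => ¬ fake v).filter fun v => G.connectedComponentMk v = Γ).card
        ≤ (E Γ).card := by
    intro Γ
    have hc : (G.induce Γ.supp).Connected := Γ.connected_toSimpleGraph
    have h1 := hc.card_vert_le_card_edgeSet_add_one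
    have hE : Nat.card (G.induce Γ.supp).edgeSet ≤ (E Γ).card := by
      rw [← Nat.card_eq_finsetCard (E Γ)]
      refine Nat.card_le_card_of_injective
        (fun e => ⟨Sym2.map Subtype.val e.1, ?_⟩) ?_
      · obtain ⟨e, he⟩ := e
        induction e with
        | _ a b =>
          have ha : G.connectedComponentMk a.1 = Γ := a.2
          have hb : G.connectedComponentMk b.1 = Γ := b.2
          have hab : G.Adj a.1 b.1 := by simpa using he
          simp [E, hab, ha, hb]
      · intro e e' hee
        exact Subtype.ext (Sym2.map.injective Subtype.val_injective (congrArg Subtype.val hee))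
    have hn : Nat.card Γ.supp = (univ.filter fun v => G.connectedComponentMk v = Γ).card := by
      rw [Nat.card_eq_fintype_card, Fintype.card_subtype]
      simp
    have hsub : ((univ.filter fun v => ¬ fake v).filter fun v => G.connectedComponentMk v = Γ) ⊆
        (univ.filter fun v => G.connectedComponentMk v = Γ) := by
      intro v; simp
    by_cases ht : Nat.card (G.induce Γ.supp).edgeSet + 1 = Nat.card Γ.supp
    · obtain ⟨v, hv, hf⟩ := hcon Γ (SimpleGraph.isTree_iff_connected_and_card.2 ⟨hc, ht⟩)
      have := Finset.card_lt_card (Finset.ssubset_iff_of_subset hsub |>.2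
        ⟨v, by simpa using hv, by simp [hf]⟩)
      omega
    · have := Finset.card_le_card hsub
      omega
  have hg := Finset.card_eq_sum_card_fiberwise (s := univ.filter fun v => ¬ fake v)
    (t := (univ : Finset G.ConnectedComponent)) (f := G.connectedComponentMk) (by simp)
  have hd : ∑ Γ, (E Γ).card ≤ G.edgeFinset.card := by
    rw [← Finset.card_biUnion]
    · exact Finset.card_le_card (Finset.biUnion_subset.2 fun Γ _ => Finset.filter_subset _ _)
    · intro Γ _ Δ _ hne
      refine Finset.disjoint_left.2 ?_
      intro e he he'
      induction e with
      | _ a b =>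
        have h1 := (Finset.mem_filter.1 he).2 a (by simp)
        have h2 := (Finset.mem_filter.1 he').2 a (by simp)
        exact hne (h1.symm.trans h2)
  have := Finset.sum_le_sum fun Γ (_ : Γ ∈ (univ : Finset G.ConnectedComponent)) => key Γ
  omega
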